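/- arXiv:0905.4441 — 3 statements merged into one kernel-verified Lean document; each statement's English description precedes it below -/
import Mathlib

section
/- Let d ≥ 1, let c, c₁, c₂ be points of Euclidean space ℝ^d and let r > 0, r₁ > 0, r₂ > 0 be real numbers. Assume that: the closed ball B(c₁,r₁) of radius r₁ centered at c₁ intersects the closed ball B(c,r); the closed ball B(c₂,r₂) intersects B(c,r); c₁ does not lie in the open ball of radius r₂ centered at c₂; dist(c,c₁) ≥ 2r; dist(c,c₂) ≥ 2r; and dist(c,c₁) ≤ dist(c,c₂). Then the projections of c₁ and c₂ onto the unit sphere centered at c are at distance at least 1/2, i.e. ‖(c₁ − c)/‖c₁ − c‖ − (c₂ − c)/‖c₂ − c‖‖ ≥ 1/2. -/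
open Metric Set

/-!
Put `c` at the origin and let `x = c₁ - c`, `y = c₂ - c`. Travel from `x` to `y` by first rotating
`x` on its sphere to the direction of `y`, which costs `‖x‖` times the distance between the two unit
vectors, and then moving radially, which costs `‖y‖ - ‖x‖`. As `c₁` lies outside the ball around
`c₂` and that ball comes within `r` of `c`, we have `‖x - y‖ ≥ ‖y‖ - r`; so the rotation costs at
least `‖x‖ - r`, which is at least `‖x‖ / 2` when `‖x‖ ≥ 2 * r`.
-/

open NormedSpace (normalize norm_smul_normalize norm_normalize)

section

variable {E : Type*} [NormedAddCommGroup E] [NormedSpace ℝ E]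

theorem norm_normalize_le_one (x : E) : ‖normalize x‖ ≤ 1 := by
  rcases eq_or_ne x 0 with rfl | hx
  · simp
  · exact (norm_normalize hx).le

theorem norm_sub_le_norm_mul_norm_normalize_sub_add_abs (x y : E) :
    ‖x - y‖ ≤ ‖x‖ * ‖normalize x - normalize y‖ + |‖x‖ - ‖y‖| :=
  calc
    ‖x - y‖ = ‖‖x‖ • (normalize x - normalize y) + (‖x‖ - ‖y‖) • normalize y‖ := by
      rw [smul_sub, sub_smul, norm_smul_normalize, norm_smul_normalize, sub_add_sub_cancel]
    _ ≤ ‖x‖ * ‖normalize x - normalize y‖ + |‖x‖ - ‖y‖| * ‖normalize y‖ := by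
      refine (norm_add_le _ _).trans_eq ?_
      rw [norm_smul, norm_smul, norm_norm, Real.norm_eq_abs]
    _ ≤ ‖x‖ * ‖normalize x - normalize y‖ + |‖x‖ - ‖y‖| := by
      gcongr
      exact mul_le_of_le_one_right (abs_nonneg _) (norm_normalize_le_one y)

theorem one_sub_div_norm_le_norm_normalize_sub {x y : E} {r : ℝ} (hx : x ≠ 0)
    (hxy : ‖x‖ ≤ ‖y‖) (hr : ‖y‖ - r ≤ ‖x - y‖) :
    1 - r / ‖x‖ ≤ ‖normalize x - normalize y‖ := by
  have hx_pos : 0 < ‖x‖ := norm_pos_iff.mpr hx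
  have travel := norm_sub_le_norm_mul_norm_normalize_sub_add_abs x y
  rw [abs_of_nonpos (sub_nonpos.mpr hxy)] at travel
  rw [one_sub_div hx_pos.ne', div_le_iff₀' hx_pos]
  linarith

theorem angular_separation_general {c c₁ c₂ : E} {r r₂ : ℝ}
    (h₂ : (closedBall c₂ r₂ ∩ closedBall c r).Nonempty) (hc₁ : c₁ ∉ ball c₂ r₂)
    (hne : c₁ ≠ c) (hle : dist c c₁ ≤ dist c c₂) :
    1 - r / dist c c₁ ≤ ‖normalize (c₁ - c) - normalize (c₂ - c)‖ := by
  have center_dist : dist c₂ c ≤ r₂ + r := dist_le_add_of_nonempty_closedBall_inter_closedBall h₂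
  have far : r₂ ≤ dist c₁ c₂ := by simpa only [mem_ball, not_lt] using hc₁
  rw [dist_eq_norm] at center_dist far
  rw [dist_eq_norm', dist_eq_norm'] at hle
  rw [dist_eq_norm']
  refine one_sub_div_norm_le_norm_normalize_sub (sub_ne_zero.mpr hne) hle ?_
  rw [sub_sub_sub_cancel_right]
  linarith

end

/-- Angular separation of the centers of two large balls meeting a small
ball: their projections onto the unit sphere centered at `c` are at distance at
least `1/2`. -/
theorem angular_separation (d : ℕ) (hd : 1 ≤ d)
    (c c₁ c₂ : EuclideanSpace ℝ (Fin d)) (r r₁ r₂ : ℝ)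
    (hr : 0 < r) (hr₁ : 0 < r₁) (hr₂ : 0 < r₂)
    (h₁ : (closedBall c₁ r₁ ∩ closedBall c r).Nonempty)
    (h₂ : (closedBall c₂ r₂ ∩ closedBall c r).Nonempty)
    (hc₁ : c₁ ∉ ball c₂ r₂)
    (hd₁ : 2 * r ≤ dist c c₁)
    (hd₂ : 2 * r ≤ dist c c₂)
    (hle : dist c c₁ ≤ dist c c₂) :
    1 / 2 ≤ ‖(‖c₁ - c‖)⁻¹ • (c₁ - c) - (‖c₂ - c‖)⁻¹ • (c₂ - c)‖ := by
  have hdist : 0 < dist c c₁ := by linarith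
  refine le_trans ?_ (angular_separation_general h₂ hc₁ (dist_pos.mp hdist).symm hle)
  rw [one_sub_div hdist.ne', le_div_iff₀ hdist]
  linarith
end

section
/- Let d ≥ 1, let P be a finite set of at least 2 points in Euclidean space ℝ^d, and for each p ∈ P let r_p = min{dist(p,q) : q ∈ P, q ≠ p} and let b_p be the closed ball of radius r_p centered at p. Let c ∈ ℝ^d and r > 0. Then the number of points p ∈ P such that r_p ≥ r, the ball b_p intersects the closed ball B(c,r) of radius r centered at c, and dist(c,p) > 2r, is at most 5^d. -/
open Metric Set

/-!
Project the far centers radially onto the unit sphere around `c`. A center `p` satisfies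
`dist c p ≤ rp p + r`, and `rp p` is at most the distance from `p` to any other center, so two
centers are almost as far apart as the farther of them is from `c`. Moving the farther one
radially inwards costs only the difference of the two distances to `c`, so the projections are
at distance at least `1 / 2`. The balls of radius `1 / 4` around them have disjoint interiors and
lie in a ball of radius `5 / 4`, so comparing volumes leaves room for at most `5 ^ d` of them.
-/

theorem encard_le_natCast_of_forall_finset_card_le {α : Type*} {s : Set α} {n : ℕ}
    (h : ∀ t : Finset α, ↑t ⊆ s → t.card ≤ n) : s.encard ≤ n := by
  refine ENat.forall_natCast_le_iff_le.1 fun k hk ↦ ?_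
  obtain ⟨t, hts, htk⟩ := exists_subset_encard_eq hk
  obtain ⟨t, rfl⟩ := (finite_of_encard_eq_coe htk).exists_finset_coe
  rw [← htk, encard_coe_eq_coe_finsetCard]
  exact mod_cast h t hts

section NormedSpace

open Module NormedSpace

variable {E : Type*} [NormedAddCommGroup E] [NormedSpace ℝ E]

theorem encard_le_five_pow_finrank_of_pairwise_one_le_norm_sub [FiniteDimensional ℝ E] {s : Set E}
    (hs : ∀ x ∈ s, ‖x‖ ≤ 2) (hsep : s.Pairwise fun x y ↦ 1 ≤ ‖x - y‖) :
    s.encard ≤ 5 ^ finrank ℝ E := by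
  have card_le (t : Finset E) (ht : ↑t ⊆ s) : t.card ≤ 5 ^ finrank ℝ E :=
    Besicovitch.card_le_of_separated t (fun x hx ↦ hs x (ht hx))
      fun x hx y hy hxy ↦ hsep (ht hx) (ht hy) hxy
  exact mod_cast encard_le_natCast_of_forall_finset_card_le card_le

theorem encard_le_five_pow_finrank_of_pairwise_le_dist [FiniteDimensional ℝ E] {ι : Type*}
    {s : Set ι} {f : ι → E} {c : E} {δ : ℝ} (hδ : 0 < δ)
    (hmaps : MapsTo f s (closedBall c (2 * δ)))
    (hsep : s.Pairwise fun i j ↦ δ ≤ dist (f i) (f j)) :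
    s.encard ≤ 5 ^ finrank ℝ E := by
  let g : ι → E := fun i ↦ δ⁻¹ • (f i - c)
  have norm_g (i : ι) : ‖g i‖ = dist (f i) c / δ := by
    rw [norm_smul_of_nonneg (inv_nonneg.2 hδ.le), dist_eq_norm, inv_mul_eq_div]
  have norm_g_sub (i j : ι) : ‖g i - g j‖ = dist (f i) (f j) / δ := by
    rw [← smul_sub, sub_sub_sub_cancel_right, norm_smul_of_nonneg (inv_nonneg.2 hδ.le),
      dist_eq_norm, inv_mul_eq_div]
  have hg : s.Pairwise fun i j ↦ 1 ≤ ‖g i - g j‖ := by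
    intro i hi j hj hij
    rw [norm_g_sub, one_le_div hδ]
    exact hsep hi hj hij
  have g_inj : InjOn g s := by
    intro i hi j hj hij
    by_contra hne
    have one_le : 1 ≤ ‖g i - g j‖ := hg hi hj hne
    rw [hij, sub_self, norm_zero] at one_le
    exact zero_lt_one.not_ge one_le
  rw [← g_inj.encard_image]
  refine encard_le_five_pow_finrank_of_pairwise_one_le_norm_sub ?_ (g_inj.pairwise_image.2 hg)
  rintro _ ⟨i, hi, rfl⟩
  rw [norm_g, div_le_iff₀ hδ]
  exact hmaps hi

theorem norm_sub_le_abs_add_norm_mul_norm_normalize_sub (x y : E) :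
    ‖x - y‖ ≤ |‖x‖ - ‖y‖| + ‖x‖ * ‖normalize x - normalize y‖ := by
  have norm_normalize_le : ‖normalize y‖ ≤ 1 := by
    rcases eq_or_ne y 0 with rfl | hy
    · simp
    · exact (norm_normalize hy).le
  have decomp : x - y =
      (‖x‖ - ‖y‖) • normalize y + ‖x‖ • (normalize x - normalize y) := by
    rw [sub_smul, smul_sub, norm_smul_normalize, norm_smul_normalize]
    abel
  calc ‖x - y‖
      ≤ ‖(‖x‖ - ‖y‖) • normalize y‖ + ‖‖x‖ • (normalize x - normalize y)‖ :=
        decomp ▸ norm_add_le _ _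
    _ = |‖x‖ - ‖y‖| * ‖normalize y‖ + ‖x‖ * ‖normalize x - normalize y‖ := by
        rw [norm_smul, norm_smul, norm_norm, Real.norm_eq_abs]
    _ ≤ |‖x‖ - ‖y‖| + ‖x‖ * ‖normalize x - normalize y‖ := by
        gcongr
        exact mul_le_of_le_one_right (abs_nonneg _) norm_normalize_le

theorem one_sub_le_norm_normalize_sub_normalize {x y : E} {θ : ℝ} (hx : x ≠ 0)
    (hxy : ‖x‖ ≤ ‖y‖) (h : ‖y‖ ≤ ‖x - y‖ + θ * ‖x‖) :
    1 - θ ≤ ‖normalize x - normalize y‖ := by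
  have norm_sub_le := norm_sub_le_abs_add_norm_mul_norm_normalize_sub x y
  rw [abs_sub_comm, abs_of_nonneg (sub_nonneg.2 hxy)] at norm_sub_le
  refine le_of_mul_le_mul_left ?_ (norm_pos_iff.2 hx)
  linarith

theorem half_le_norm_normalize_sub_normalize {x y : E} {r : ℝ}
    (hrx : 2 * r < ‖x‖) (hry : 2 * r < ‖y‖) (hx : ‖x‖ ≤ ‖x - y‖ + r)
    (hy : ‖y‖ ≤ ‖x - y‖ + r) :
    1 / 2 ≤ ‖normalize x - normalize y‖ := by
  wlog hxy : ‖x‖ ≤ ‖y‖ generalizing x y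
  · rw [norm_sub_rev]
    rw [norm_sub_rev] at hx hy
    exact this hry hrx hy hx (le_of_not_ge hxy)
  have x_ne_zero : x ≠ 0 := by
    rintro rfl
    rw [zero_sub, norm_neg] at hy
    rw [norm_zero] at hrx
    linarith
  have half_le :=
    one_sub_le_norm_normalize_sub_normalize (θ := 1 / 2) x_ne_zero hxy (by linarith)
  rwa [sub_half] at half_le

theorem packing_centers_far_general [FiniteDimensional ℝ E] (P : Set E) (rp : E → ℝ)
    (hrp : P.Pairwise fun p q ↦ rp p ≤ dist p q) (c : E) (r : ℝ) :
    {p ∈ P | (closedBall p (rp p) ∩ closedBall c r).Nonempty ∧ 2 * r < dist c p}.encard ≤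
      5 ^ finrank ℝ E := by
  refine encard_le_five_pow_finrank_of_pairwise_le_dist (f := fun p ↦ normalize (p - c)) (c := 0)
    (δ := 1 / 2) one_half_pos ?_ ?_
  · rintro p ⟨-, hmeet, hfar⟩
    have hr : 0 ≤ r := nonempty_closedBall.1 hmeet.right
    have hne : c ≠ p := dist_pos.1 (by linarith)
    simp [norm_normalize (sub_ne_zero.2 hne.symm)]
  · rintro p ⟨hp, hpmeet, hpfar⟩ q ⟨hq, hqmeet, hqfar⟩ hpq
    have hcp : dist c p ≤ dist p q + r := by
      rw [dist_comm c]
      exact (dist_le_add_of_nonempty_closedBall_inter_closedBall hpmeet).trans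
        (by gcongr; exact hrp hp hq hpq)
    have hcq : dist c q ≤ dist p q + r := by
      rw [dist_comm c, dist_comm p]
      exact (dist_le_add_of_nonempty_closedBall_inter_closedBall hqmeet).trans
        (by gcongr; exact hrp hq hp hpq.symm)
    rw [dist_eq_norm' c, dist_eq_norm, ← sub_sub_sub_cancel_right p q c] at hcp hcq
    rw [dist_eq_norm'] at hpfar hqfar
    rw [dist_eq_norm]
    exact half_le_norm_normalize_sub_normalize hpfar hqfar hcp hcq

end NormedSpace

/-- The number of points `p ∈ P` whose nearest-neighbor distance is at
least `r`, whose empty ball meets the closed ball `B(c,r)`, and which lie at distance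
more than `2r` from `c`, is at most `5^d`. -/
theorem packing_centers_far (d : ℕ) (hd : 1 ≤ d)
    (P : Set (EuclideanSpace ℝ (Fin d))) (hPfin : P.Finite) (hP : 2 ≤ P.ncard)
    (rp : EuclideanSpace ℝ (Fin d) → ℝ)
    (hrp : ∀ p ∈ P, IsLeast ((dist p) '' (P \ {p})) (rp p))
    (c : EuclideanSpace ℝ (Fin d)) (r : ℝ) (hr : 0 < r) :
    {p ∈ P | r ≤ rp p ∧ (closedBall p (rp p) ∩ closedBall c r).Nonempty ∧
      2 * r < dist c p}.ncard ≤ 5 ^ d := by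
  have encard_le := packing_centers_far_general P rp
    (fun p hp q hq hpq ↦ (hrp p hp).2 ⟨q, ⟨hq, hpq.symm⟩, rfl⟩) c r
  rw [finrank_euclideanSpace_fin] at encard_le
  refine (encard_le_coe_iff_finite_ncard_le.1 ?_).2
  push_cast
  refine (encard_le_encard ?_).trans encard_le
  rintro p ⟨hp, -, hfar⟩
  exact ⟨hp, hfar⟩
end

section
/- Let d ≥ 1, let P be a finite set of at least 2 points in Euclidean space ℝ^d, and for each p ∈ P let r_p = min{dist(p,q) : q ∈ P, q ≠ p} and let b_p be the closed ball of radius r_p centered at p. Let c ∈ ℝ^d and r > 0. Then the number of points p ∈ P such that r_p ≥ r and the empty ball b_p intersects the closed ball of radius r centered at c is at most 2 · 5^d. -/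
open Metric Set

/-!
For distinct centres `p`, `q` as in the theorem, `dist p q` is at least the radius of the empty ball
around `p`. That radius is at least `r` and, since the ball meets `closedBall c r`, also at least
`dist p c - r`. The second bound keeps `q` away from `p` when `p` is far from `c`, so the centres
can be pulled radially into `closedBall c (2 * r)` and remain at mutual distance at least `r`.
A volume comparison bounds the number of such points in that ball by `5 ^ d`.
-/

section RadialRetraction

variable {E : Type*} [NormedAddCommGroup E] [NormedSpace ℝ E] {x y : E} {R δ s : ℝ}

/-- The radial retraction of a normed space onto the closed ball of radius `R ≥ 0` around the
origin. At `x = 0` the junk value `R / 0 = 0` is harmless, as the factor multiplies `x`. -/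
noncomputable def radialRetraction (R : ℝ) (x : E) : E :=
  min 1 (R / ‖x‖) • x

theorem radialRetraction_of_norm_le (hx : ‖x‖ ≤ R) : radialRetraction R x = x := by
  rcases eq_or_ne x 0 with rfl | hx₀
  · exact smul_zero _
  · rw [radialRetraction, min_eq_left ((one_le_div (norm_pos_iff.2 hx₀)).2 hx), one_smul]

theorem radialRetraction_of_le_norm (hx : R ≤ ‖x‖) :
    radialRetraction R x = (R / ‖x‖) • x := by
  rw [radialRetraction, min_eq_right (div_le_one_of_le₀ hx (norm_nonneg x))]

theorem norm_radialRetraction_le (hR : 0 ≤ R) (x : E) : ‖radialRetraction R x‖ ≤ R := by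
  rw [radialRetraction, norm_smul, Real.norm_of_nonneg (by positivity)]
  exact mul_le_of_le_div₀ hR (norm_nonneg x) (min_le_right _ _)

theorem mul_norm_sub_le_norm_smul_sub (hs : s ≤ 1) (h : ‖x‖ - δ ≤ ‖x - y‖) :
    s * ‖x‖ - δ ≤ ‖s • x - y‖ := by
  have norm_shift : ‖x - s • x‖ = (1 - s) * ‖x‖ := by
    have factor : x - s • x = (1 - s) • x := by rw [sub_smul, one_smul]
    rw [factor, norm_smul, Real.norm_of_nonneg (sub_nonneg.2 hs)]
  linarith [norm_sub_le_norm_sub_add_norm_sub x (s • x) y]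

theorem le_norm_radialRetraction_sub_of_norm_le (hδ : 0 ≤ δ) (hR : 2 * δ ≤ R) (hyx : ‖y‖ ≤ ‖x‖)
    (hsep : δ ≤ ‖x - y‖) (hx : ‖x‖ - δ ≤ ‖x - y‖) :
    δ ≤ ‖radialRetraction R x - radialRetraction R y‖ := by
  rcases le_or_gt ‖x‖ R with hxR | hxR
  · rwa [radialRetraction_of_norm_le hxR, radialRetraction_of_norm_le (hyx.trans hxR)]
  have hx₀ : 0 < ‖x‖ := by linarith
  rw [radialRetraction_of_le_norm hxR.le]
  rcases le_or_gt ‖y‖ R with hyR | hyR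
  · have shrink := mul_norm_sub_le_norm_smul_sub (div_le_one_of_le₀ hxR.le hx₀.le) hx
    rw [div_mul_cancel₀ _ hx₀.ne'] at shrink
    rw [radialRetraction_of_norm_le hyR]
    linarith
  -- Shrink `x` to the norm of `y` first; the homothety with ratio `R / ‖y‖` then moves both points.
  · have hy₀ : 0 < ‖y‖ := by linarith
    have shrink := mul_norm_sub_le_norm_smul_sub (div_le_one_of_le₀ hyx hx₀.le) hx
    rw [div_mul_cancel₀ _ hx₀.ne'] at shrink
    have factor : (R / ‖x‖) • x - (R / ‖y‖) • y = (R / ‖y‖) • ((‖y‖ / ‖x‖) • x - y) := by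
      rw [smul_sub, smul_smul, div_mul_div_cancel₀ hy₀.ne']
    rw [radialRetraction_of_le_norm hyR.le, factor, norm_smul,
      Real.norm_of_nonneg (div_nonneg (by linarith) hy₀.le)]
    calc δ ≤ R - R / ‖y‖ * δ := by
          have : R / ‖y‖ * δ ≤ δ := mul_le_of_le_one_left hδ (div_le_one_of_le₀ hyR.le hy₀.le)
          linarith
      _ = R / ‖y‖ * (‖y‖ - δ) := by rw [mul_sub, div_mul_cancel₀ _ hy₀.ne']
      _ ≤ R / ‖y‖ * ‖(‖y‖ / ‖x‖) • x - y‖ :=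
          mul_le_mul_of_nonneg_left shrink (div_nonneg (by linarith) hy₀.le)

theorem le_norm_radialRetraction_sub (hδ : 0 ≤ δ) (hR : 2 * δ ≤ R) (hsep : δ ≤ ‖x - y‖)
    (hx : ‖x‖ - δ ≤ ‖x - y‖) (hy : ‖y‖ - δ ≤ ‖x - y‖) :
    δ ≤ ‖radialRetraction R x - radialRetraction R y‖ := by
  rcases le_total ‖y‖ ‖x‖ with hyx | hxy
  · exact le_norm_radialRetraction_sub_of_norm_le hδ hR hyx hsep hx
  · rw [norm_sub_rev] at hsep hy ⊢
    exact le_norm_radialRetraction_sub_of_norm_le hδ hR hxy hsep hy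

end RadialRetraction

theorem injOn_of_pairwise_le_dist {α β : Type*} [PseudoMetricSpace β] {f : α → β} {S : Set α}
    {r : ℝ} (hr : 0 < r) (hf : S.Pairwise fun p q => r ≤ dist (f p) (f q)) : InjOn f S := by
  intro p hp q hq hpq
  by_contra hne
  have hle : r ≤ dist (f p) (f q) := hf hp hq hne
  rw [hpq, dist_self] at hle
  exact hle.not_gt hr

theorem encard_le_of_forall_finset_card_le {α : Type*} {S : Set α} {n : ℕ}
    (h : ∀ s : Finset α, (s : Set α) ⊆ S → s.card ≤ n) : S.encard ≤ n := by
  by_contra! hlt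
  obtain ⟨t, htS, ht⟩ := exists_subset_encard_eq (Order.add_one_le_of_lt hlt)
  have t_finite : t.Finite := finite_of_encard_eq_coe (k := n + 1) (by exact_mod_cast ht)
  lift t to Finset α using t_finite
  rw [encard_coe_eq_coe_finsetCard] at ht
  have card_eq : t.card = n + 1 := by exact_mod_cast ht
  have := h t htS
  omega

theorem ball_inter_subset_singleton_of_isLeast {α : Type*} [PseudoMetricSpace α] {P : Set α}
    {p : α} {ρ : ℝ} (hρ : IsLeast (dist p '' (P \ {p})) ρ) : ball p ρ ∩ P ⊆ {p} := by
  rintro q ⟨hqp, hq⟩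
  by_contra hne
  exact (mem_ball'.1 hqp).not_ge (hρ.2 (mem_image_of_mem _ ⟨hq, hne⟩))

section Packing

open Module (finrank)

variable {E : Type*} [NormedAddCommGroup E] [NormedSpace ℝ E] [FiniteDimensional ℝ E]
  {S : Set E} {c : E} {r : ℝ}

theorem encard_le_of_subset_closedBall_of_pairwise_le_dist (hr : 0 < r)
    (hball : S ⊆ closedBall c (2 * r)) (hsep : S.Pairwise fun p q => r ≤ dist p q) :
    S.encard ≤ (5 ^ finrank ℝ E : ℕ) := by
  classical
  refine encard_le_of_forall_finset_card_le fun s hs => ?_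
  let normalize (p : E) : E := r⁻¹ • (p - c)
  have normalize_injective : Function.Injective normalize :=
    (smul_right_injective E (inv_ne_zero hr.ne')).comp sub_left_injective
  rw [← Finset.card_image_of_injective s normalize_injective]
  refine Besicovitch.card_le_of_separated _ (Finset.forall_mem_image.2 fun p hp => ?_)
    (Finset.forall_mem_image.2 fun p hp => Finset.forall_mem_image.2 fun q hq hpq => ?_)
  · rw [norm_smul, norm_inv, Real.norm_of_nonneg hr.le, inv_mul_le_iff₀ hr, mul_comm,
      ← dist_eq_norm]
    exact hball (hs hp)
  · rw [← smul_sub, sub_sub_sub_cancel_right, norm_smul, norm_inv, Real.norm_of_nonneg hr.le,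
      le_inv_mul_iff₀ hr, mul_one, ← dist_eq_norm]
    exact hsep (hs hp) (hs hq) (ne_of_apply_ne normalize hpq)

theorem encard_le_of_pairwise_le_dist_of_dist_le (hr : 0 < r)
    (hsep : S.Pairwise fun p q => r ≤ dist p q)
    (hfar : S.Pairwise fun p q => dist p c ≤ dist p q + r) :
    S.encard ≤ (5 ^ finrank ℝ E : ℕ) := by
  let retract (p : E) : E := radialRetraction (2 * r) (p - c)
  have retract_sep : S.Pairwise fun p q => r ≤ dist (retract p) (retract q) := by
    intro p hp q hq hpq
    have hpc : dist p c ≤ dist p q + r := hfar hp hq hpq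
    have hqc : dist q c ≤ dist p q + r := dist_comm p q ▸ hfar hq hp hpq.symm
    have hpq_norm : ‖(p - c) - (q - c)‖ = dist p q := by
      rw [sub_sub_sub_cancel_right, dist_eq_norm]
    rw [dist_eq_norm]
    apply le_norm_radialRetraction_sub hr.le le_rfl <;> rw [hpq_norm]
    · exact hsep hp hq hpq
    · rwa [← dist_eq_norm, sub_le_iff_le_add]
    · rwa [← dist_eq_norm, sub_le_iff_le_add]
  have retract_injOn : InjOn retract S := injOn_of_pairwise_le_dist hr retract_sep
  rw [← retract_injOn.encard_image]
  refine encard_le_of_subset_closedBall_of_pairwise_le_dist (c := 0) hr ?_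
    (retract_injOn.pairwise_image.2 retract_sep)
  rintro _ ⟨p, -, rfl⟩
  rw [mem_closedBall_zero_iff]
  exact norm_radialRetraction_le (by positivity) _

theorem packing_lemma_general {P : Set E} {ρ : E → ℝ}
    (hempty : ∀ p ∈ P, ball p (ρ p) ∩ P ⊆ {p}) (c : E) (hr : 0 < r) :
    {p ∈ P | r ≤ ρ p ∧ (closedBall p (ρ p) ∩ closedBall c r).Nonempty}.encard ≤
      (5 ^ finrank ℝ E : ℕ) := by
  have radius_le_dist {p q : E} (hp : p ∈ P) (hq : q ∈ P) (hpq : p ≠ q) : ρ p ≤ dist p q := by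
    by_contra! hlt
    exact hpq (hempty p hp ⟨mem_ball'.2 hlt, hq⟩).symm
  refine encard_le_of_pairwise_le_dist_of_dist_le (c := c) hr ?_ ?_
  · rintro p ⟨hp, hrp, -⟩ q ⟨hq, -⟩ hpq
    exact hrp.trans (radius_le_dist hp hq hpq)
  · rintro p ⟨hp, -, hmeet⟩ q ⟨hq, -⟩ hpq
    calc dist p c ≤ ρ p + r := dist_le_add_of_nonempty_closedBall_inter_closedBall hmeet
      _ ≤ dist p q + r := by gcongr; exact radius_le_dist hp hq hpq

end Packing

/-- packing lemma, Lemma 4 of the paper: a closed ball of radius `r`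
intersects at most `2 · 5^d` empty balls of radius at least `r`. -/
theorem packing_lemma (d : ℕ) (hd : 1 ≤ d)
    (P : Set (EuclideanSpace ℝ (Fin d))) (hPfin : P.Finite) (hP : 2 ≤ P.ncard)
    (rp : EuclideanSpace ℝ (Fin d) → ℝ)
    (hrp : ∀ p ∈ P, IsLeast ((dist p) '' (P \ {p})) (rp p))
    (c : EuclideanSpace ℝ (Fin d)) (r : ℝ) (hr : 0 < r) :
    {p ∈ P | r ≤ rp p ∧
      (closedBall p (rp p) ∩ closedBall c r).Nonempty}.ncard ≤ 2 * 5 ^ d := by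
  have encard_le := packing_lemma_general
    (fun p hp => ball_inter_subset_singleton_of_isLeast (hrp p hp)) c hr
  rw [finrank_euclideanSpace_fin] at encard_le
  exact (ENat.toNat_le_of_le_natCast encard_le).trans (Nat.le_mul_of_pos_left _ two_pos)
end
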